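/- arXiv:2303.03567 — 2 statements merged into one kernel-verified Lean document; each statement's English description precedes it below -/
import Mathlib

section
/- For every d ≥ 2 and every s < d there exist a set A ⊆ ℝ^d, a sequence R_n → ∞, and a sequence of distances d_j → ∞ such that lim_{n → ∞} sup_{x ∈ ℝ^d} H^s_∞(A_{R_n}(x)) = 1, and yet d_j ∉ Δ(A) for every j; that is, A avoids infinitely many large distances despite its normalized truncations attaining full s-dimensional dyadic Hausdorff content along the sequence R_n. -/
open MeasureTheory Set Metric Filter
open scoped ENNReal NNReal Topology

noncomputable section

abbrev Euc (d : ℕ) : Type := EuclideanSpace ℝ (Fin d)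

/-- The closed unit cube `[0,1]^d`. -/
def unitCube (d : ℕ) : Set (Euc d) := {x | ∀ i, x i ∈ Icc (0:ℝ) 1}

/-- The distance set `Δ(E,F) = {|x-y| : x ∈ E, y ∈ F}`. -/
def distSet {d : ℕ} (E F : Set (Euc d)) : Set ℝ :=
  {t | ∃ x ∈ E, ∃ y ∈ F, dist x y = t}

/-- `Q` is a dyadic cube of side length `l`, i.e. `Q = 2^{-k}(m + [0,1]^d)`. -/
def IsDyadicCube {d : ℕ} (Q : Set (Euc d)) (l : ℝ) : Prop :=
  ∃ (k : ℤ) (m : Fin d → ℤ), l = (2:ℝ) ^ (-k) ∧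
    Q = {x | ∀ i, (m i : ℝ) * (2:ℝ) ^ (-k) ≤ x i ∧ x i ≤ ((m i : ℝ) + 1) * (2:ℝ) ^ (-k)}

/-- The `s`-dimensional dyadic Hausdorff content: the infimum of `∑ ℓ(Q_i)^s` over
countable covers of `E` by dyadic cubes. -/
def dyadicContent {d : ℕ} (s : ℝ) (E : Set (Euc d)) : ℝ≥0∞ :=
  ⨅ (Q : ℕ → Set (Euc d)) (l : ℕ → ℝ) (_ : ∀ i, IsDyadicCube (Q i) (l i))
    (_ : E ⊆ ⋃ i, Q i), ∑' i, ENNReal.ofReal (l i ^ s)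

/-- The normalized truncation `A_R(x) = T_{x,R}[A ∩ (x + [0,R]^d)]`,
where `T_{x,R}(y) = (y - x)/R`. -/
def normTrunc {d : ℕ} (A : Set (Euc d)) (R : ℝ) (x : Euc d) : Set (Euc d) :=
  (fun y => R⁻¹ • (y - x)) '' (A ∩ {y : Euc d | ∀ i, y i - x i ∈ Icc (0:ℝ) R})

/-!
Inside a large cube take all points whose coordinates exceed an integer by less than a tiny `η`.
Squared distances between such points are within `O(η · distance)` of an integer, so up to any
prescribed size `D` no distance is of the form `√(j² + 1/2)`. Rescaling a cube of side `2 ^ K` to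
side `1` turns these points into a product of combs with `2 ^ K` teeth of width `η / 2 ^ K`. Each
tooth carries the fraction `2 ^ (-K)` of the mass, so as soon as `2 ^ (-K) ≤ (η / 2 ^ K) ^ t` the
normalized length measure on the comb gives every dyadic interval of length `r` mass at most
`r ^ t`, and the mass distribution principle bounds the `d * t`-dimensional content of the product
from below by `1`. The set `A` is a union of such blocks, of increasing side and decreasing `η`,
placed so sparsely along the diagonal that distances between different blocks never come near the
avoided ones.
-/

section DyadicContent

variable {d : ℕ} {s : ℝ} {E F : Set (Euc d)}

lemma dyadicContent_mono (h : E ⊆ F) : dyadicContent s E ≤ dyadicContent s F :=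
  iInf₂_mono fun _ _ => iInf_mono fun _ => iInf_mono' fun hF => ⟨h.trans hF, le_rfl⟩

lemma dyadicContent_le_tsum {Q : ℕ → Set (Euc d)} {l : ℕ → ℝ}
    (hQ : ∀ i, IsDyadicCube (Q i) (l i)) (hE : E ⊆ ⋃ i, Q i) :
    dyadicContent s E ≤ ∑' i, ENNReal.ofReal (l i ^ s) :=
  iInf₂_le_of_le Q l <| iInf₂_le hQ hE

lemma measure_div_le_dyadicContent (μ : Measure (Euc d)) (c : ℝ≥0∞)
    (h : ∀ Q l, IsDyadicCube Q l → μ (E ∩ Q) ≤ c * ENNReal.ofReal (l ^ s)) :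
    μ E / c ≤ dyadicContent s E := by
  refine le_iInf₂ fun Q l => le_iInf₂ fun hQ hE => ENNReal.div_le_of_le_mul' ?_
  calc μ E = μ (⋃ i, E ∩ Q i) := by rw [← inter_iUnion, inter_eq_left.2 hE]
    _ ≤ ∑' i, μ (E ∩ Q i) := measure_iUnion_le _
    _ ≤ ∑' i, c * ENNReal.ofReal (l i ^ s) := ENNReal.tsum_le_tsum fun i => h _ _ (hQ i)
    _ = c * ∑' i, ENNReal.ofReal (l i ^ s) := ENNReal.tsum_mul_left

lemma exists_isDyadicCube_ofReal_rpow_le (d : ℕ) (hs : 0 < s) {ε : ℝ≥0∞} (hε : 0 < ε) :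
    ∃ (Q : Set (Euc d)) (l : ℝ), IsDyadicCube Q l ∧ ENNReal.ofReal (l ^ s) ≤ ε := by
  have hlim : Tendsto (fun k : ℕ => ENNReal.ofReal (((2 : ℝ) ^ (-(k : ℤ))) ^ s)) atTop (𝓝 0) := by
    have hpow : Tendsto (fun k : ℕ => (2 : ℝ) ^ (-(k : ℤ))) atTop (𝓝 0) := by
      simpa [Function.comp_def] using tendsto_inv_atTop_zero.comp
        (tendsto_pow_atTop_atTop_of_one_lt (one_lt_two : (1 : ℝ) < 2))
    simpa [Real.zero_rpow hs.ne'] using ENNReal.tendsto_ofReal (hpow.rpow_const (.inr hs.le))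
  obtain ⟨k, hk⟩ := (hlim.eventually_le_const hε).exists
  exact ⟨_, _, ⟨k, 0, rfl, rfl⟩, hk⟩

/-- Covers are indexed by `ℕ`, so a single cube has to be padded with a sequence of tiny cubes. -/
lemma dyadicContent_le_of_subset (hs : 0 < s) {Q : Set (Euc d)} {l : ℝ} (hQ : IsDyadicCube Q l)
    (hE : E ⊆ Q) : dyadicContent s E ≤ ENNReal.ofReal (l ^ s) := by
  refine ENNReal.le_of_forall_pos_le_add fun ε hε _ => ?_
  obtain ⟨δ, hδ_pos, hδ_sum⟩ :=
    ENNReal.exists_pos_sum_of_countable' (ENNReal.coe_ne_zero.2 hε.ne') ℕ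
  choose P p hP hp using fun n => exists_isDyadicCube_ofReal_rpow_le d hs (hδ_pos n)
  let Q' : ℕ → Set (Euc d) := fun n => n.casesOn Q P
  let l' : ℕ → ℝ := fun n => n.casesOn l p
  have hQ' : ∀ n, IsDyadicCube (Q' n) (l' n) := fun n => n.casesOn hQ hP
  calc dyadicContent s E ≤ ∑' n, ENNReal.ofReal (l' n ^ s) :=
        dyadicContent_le_tsum hQ' (hE.trans (subset_iUnion Q' 0))
    _ = ENNReal.ofReal (l ^ s) + ∑' n, ENNReal.ofReal (p n ^ s) :=
        tsum_eq_zero_add' ENNReal.summable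
    _ ≤ ENNReal.ofReal (l ^ s) + ε :=
        add_le_add_right ((ENNReal.tsum_le_tsum hp).trans hδ_sum.le) _

lemma isDyadicCube_unitCube (d : ℕ) : IsDyadicCube (unitCube d) 1 :=
  ⟨0, 0, by simp, by ext; simp [unitCube]⟩

lemma dyadicContent_le_one (hs : 0 < s) (hE : E ⊆ unitCube d) : dyadicContent s E ≤ 1 := by
  simpa using dyadicContent_le_of_subset hs (isDyadicCube_unitCube d) hE

lemma normTrunc_subset_unitCube (A : Set (Euc d)) {R : ℝ} (hR : 0 < R) (x : Euc d) :
    normTrunc A R x ⊆ unitCube d := by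
  rintro _ ⟨y, ⟨-, hy⟩, rfl⟩ i
  have hyi : (y i - x i) / R ∈ Icc 0 1 :=
    ⟨div_nonneg (hy i).1 hR.le, (div_le_one hR).2 (hy i).2⟩
  simpa [div_eq_inv_mul] using hyi

lemma volume_setOf_forall_apply_mem (S : Fin d → Set ℝ) :
    volume {x : Euc d | ∀ i, x i ∈ S i} = ∏ i, volume (S i) := by
  have hpre : {x : Euc d | ∀ i, x i ∈ S i} =
      (MeasurableEquiv.toLp 2 (Fin d → ℝ)).symm ⁻¹' univ.pi S := by
    ext x
    simp
  have hpres : MeasurePreserving (MeasurableEquiv.toLp 2 (Fin d → ℝ)).symm :=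
    PiLp.volume_preserving_ofLp (Fin d)
  rw [hpre, hpres.measure_preimage_equiv, volume_pi_pi]

lemma one_le_dyadicContent_setOf_forall_apply_mem {S : Set ℝ} {t : ℝ} (hS₀ : volume S ≠ 0)
    (hS : volume S ≠ ∞)
    (h : ∀ k m : ℤ, volume (S ∩ Icc (m * 2 ^ (-k)) ((m + 1) * 2 ^ (-k))) ≤
      volume S * ENNReal.ofReal ((2 ^ (-k)) ^ t)) :
    1 ≤ dyadicContent (d * t) {x : Euc d | ∀ i, x i ∈ S} := by
  have hvol : volume {x : Euc d | ∀ i, x i ∈ S} = volume S ^ d := by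
    simp [volume_setOf_forall_apply_mem fun _ : Fin d => S]
  rw [← ENNReal.div_self (pow_ne_zero d hS₀) (ENNReal.pow_ne_top hS)]
  nth_rw 1 [← hvol]
  refine measure_div_le_dyadicContent volume _ ?_
  rintro _ _ ⟨k, m, rfl, rfl⟩
  calc volume ({x : Euc d | ∀ i, x i ∈ S} ∩
        {x | ∀ i, (m i : ℝ) * 2 ^ (-k) ≤ x i ∧ x i ≤ ((m i : ℝ) + 1) * 2 ^ (-k)})
      = ∏ i, volume (S ∩ Icc (m i * 2 ^ (-k)) ((m i + 1) * 2 ^ (-k))) := by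
        rw [← volume_setOf_forall_apply_mem]
        congr 1
        ext x
        exact forall_and.symm
    _ ≤ ∏ _i : Fin d, volume S * ENNReal.ofReal ((2 ^ (-k)) ^ t) :=
        Finset.prod_le_prod' fun i _ => h k (m i)
    _ = volume S ^ d * ENNReal.ofReal ((2 ^ (-k)) ^ (d * t)) := by
        rw [Finset.prod_const, Finset.card_univ, Fintype.card_fin, mul_pow,
          ← ENNReal.ofReal_pow (by positivity), mul_comm (d : ℝ) t, Real.rpow_mul_natCast]
        positivity

end DyadicContent

section Comb

/-- The right `η`-neighbourhood of the integers in the line. -/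
def fractLT (η : ℝ) : Set ℝ := {z | Int.fract z < η}

/-- The part of `fractLT η` in `[0, 2 ^ K)`, rescaled to the unit interval: `2 ^ K` teeth of width
`η / 2 ^ K` each, at distance `2 ^ (-K)`. -/
def comb (K : ℕ) (η : ℝ) : Set ℝ := (fun z => 2 ^ K * z) ⁻¹' (fractLT η ∩ Ico 0 (2 ^ K))

variable {η : ℝ}

lemma measurableSet_fractLT : MeasurableSet (fractLT η) :=
  measurableSet_lt measurable_fract measurable_const

lemma fractLT_inter_Ico (hη : η ≤ 1) (m : ℤ) :
    fractLT η ∩ Ico (m : ℝ) (m + 1) = Ico (m : ℝ) (m + η) := by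
  ext z
  constructor
  · rintro ⟨hz, hzm⟩
    have hfloor : ⌊z⌋ = m := Int.floor_eq_iff.2 hzm
    have hfract : z - m < η := by simpa [fractLT, ← Int.self_sub_floor, hfloor] using hz
    exact ⟨hzm.1, by linarith⟩
  · rintro ⟨hmz, hz⟩
    have hfloor : ⌊z⌋ = m := Int.floor_eq_iff.2 ⟨hmz, by linarith⟩
    refine ⟨?_, hmz, by linarith⟩
    rw [fractLT, mem_ofPred_eq, ← Int.self_sub_floor, hfloor]
    linarith

lemma volume_fractLT_inter_Ico (hη₀ : 0 ≤ η) (hη : η ≤ 1) (m : ℤ) (N : ℕ) :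
    volume (fractLT η ∩ Ico (m : ℝ) (m + N)) = ENNReal.ofReal (η * N) := by
  induction N with
  | zero => simp
  | succ N ih =>
    have hsplit : Ico (m : ℝ) (m + (N + 1 : ℕ)) =
        Ico (m : ℝ) (m + N) ∪ Ico ((m + N : ℤ) : ℝ) ((m + N : ℤ) + 1) := by
      push_cast
      rw [Ico_union_Ico_eq_Ico (by simp) (by simp), add_assoc]
    have hdisj : Disjoint (Ico (m : ℝ) (m + N)) (Ico ((m + N : ℤ) : ℝ) ((m + N : ℤ) + 1)) := by
      push_cast
      exact Ico_disjoint_Ico_same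
    rw [hsplit, inter_union_distrib_left,
      measure_union (hdisj.mono inter_subset_right inter_subset_right)
        (measurableSet_fractLT.inter measurableSet_Ico),
      ih, fractLT_inter_Ico hη, Real.volume_Ico, add_sub_cancel_left,
      ← ENNReal.ofReal_add (by positivity) hη₀]
    push_cast
    ring_nf

lemma volume_fractLT_inter_dyadic_le (hη₀ : 0 ≤ η) (hη : η ≤ 1) (j m : ℤ) :
    volume (fractLT η ∩ Ico (m * 2 ^ j) ((m + 1) * 2 ^ j)) ≤
      ENNReal.ofReal (η * max (2 ^ j) 1) := by
  obtain ⟨c, rfl | rfl⟩ := j.eq_nat_or_neg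
  · have hint := volume_fractLT_inter_Ico hη₀ hη (m * 2 ^ c) (2 ^ c)
    push_cast at hint
    rw [zpow_natCast, add_one_mul, hint]
    exact ENNReal.ofReal_le_ofReal (mul_le_mul_of_nonneg_left (le_max_left _ _) hη₀)
  · have hc : (0 : ℤ) < 2 ^ c := by positivity
    have hlo : m / 2 ^ c * 2 ^ c ≤ m := Int.ediv_mul_le _ hc.ne'
    have hhi : m + 1 ≤ (m / 2 ^ c + 1) * 2 ^ c := Int.lt_ediv_add_one_mul_self m hc
    have hsub : Ico ((m : ℝ) * 2 ^ (-c : ℤ)) ((m + 1) * 2 ^ (-c : ℤ)) ⊆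
        Ico ((m / 2 ^ c : ℤ) : ℝ) ((m / 2 ^ c : ℤ) + (1 : ℕ)) := by
      rw [zpow_neg, zpow_natCast, ← div_eq_mul_inv, ← div_eq_mul_inv]
      refine Ico_subset_Ico ?_ ?_
      · rw [le_div_iff₀ (by positivity)]
        exact_mod_cast hlo
      · rw [div_le_iff₀ (by positivity)]
        exact_mod_cast hhi
    calc volume (fractLT η ∩ Ico ((m : ℝ) * 2 ^ (-c : ℤ)) ((m + 1) * 2 ^ (-c : ℤ)))
        ≤ volume (fractLT η ∩ Ico ((m / 2 ^ c : ℤ) : ℝ) ((m / 2 ^ c : ℤ) + (1 : ℕ))) :=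
          measure_mono (inter_subset_inter_right _ hsub)
      _ = ENNReal.ofReal (η * (1 : ℕ)) := volume_fractLT_inter_Ico hη₀ hη _ 1
      _ ≤ ENNReal.ofReal (η * max (2 ^ (-c : ℤ)) 1) := by
          rw [Nat.cast_one]
          exact ENNReal.ofReal_le_ofReal (mul_le_mul_of_nonneg_left (le_max_right _ _) hη₀)

lemma volume_comb (hη₀ : 0 ≤ η) (hη : η ≤ 1) (K : ℕ) :
    volume (comb K η) = ENNReal.ofReal η := by
  have hint := volume_fractLT_inter_Ico hη₀ hη 0 (2 ^ K)
  push_cast at hint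
  rw [zero_add] at hint
  rw [comb, Real.volume_preimage_mul_left (by positivity), hint, abs_of_pos (by positivity),
    ← ENNReal.ofReal_mul (by positivity)]
  congr 1
  field_simp

lemma volume_comb_inter_dyadic_le_mul_max (hη₀ : 0 ≤ η) (hη : η ≤ 1) (K : ℕ) (k m : ℤ) :
    volume (comb K η ∩ Icc (m * 2 ^ (-k)) ((m + 1) * 2 ^ (-k))) ≤
      ENNReal.ofReal (η * max (2 ^ (-k)) (2 ^ K)⁻¹) := by
  have hpow : (2 : ℝ) ^ (K - k : ℤ) = 2 ^ K * 2 ^ (-k) := by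
    rw [sub_eq_add_neg, zpow_add₀ two_ne_zero, zpow_natCast]
  have hsub : comb K η ∩ Ico (m * 2 ^ (-k)) ((m + 1) * 2 ^ (-k)) ⊆ (fun z => 2 ^ K * z) ⁻¹'
      (fractLT η ∩ Ico (m * 2 ^ (K - k : ℤ)) ((m + 1) * 2 ^ (K - k : ℤ))) := by
    rintro z ⟨hz, hmz, hzm⟩
    refine ⟨hz.1, ?_, ?_⟩ <;> rw [hpow, mul_left_comm]
    · exact mul_le_mul_of_nonneg_left hmz (by positivity)
    · exact mul_lt_mul_of_pos_left hzm (by positivity)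
  calc volume (comb K η ∩ Icc (m * 2 ^ (-k)) ((m + 1) * 2 ^ (-k)))
      = volume (comb K η ∩ Ico (m * 2 ^ (-k)) ((m + 1) * 2 ^ (-k))) :=
        measure_congr ((ae_eq_refl _).inter Ico_ae_eq_Icc.symm)
    _ ≤ ENNReal.ofReal (2 ^ K)⁻¹ * ENNReal.ofReal (η * max (2 ^ (K - k : ℤ)) 1) := by
        refine (measure_mono hsub).trans ?_
        rw [Real.volume_preimage_mul_left (by positivity), abs_of_pos (by positivity)]
        exact mul_le_mul_right (volume_fractLT_inter_dyadic_le hη₀ hη _ _) _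
    _ = ENNReal.ofReal (η * max (2 ^ (-k)) (2 ^ K)⁻¹) := by
        rw [← ENNReal.ofReal_mul (by positivity), mul_left_comm, hpow,
          mul_max_of_nonneg _ _ (by positivity), inv_mul_cancel_left₀ (by positivity), mul_one]

/-- The three quantities in the minimum bound the mass of an interval of length `r` in a comb of
spacing `R⁻¹` and tooth width `η / R`: the total mass, the mass of the teeth met, the length. -/
lemma min_le_mul_rpow {R r t : ℝ} (hη₀ : 0 < η) (hR : 0 < R) (hr : 0 < r) (ht₀ : 0 ≤ t)
    (ht : t ≤ 1) (htooth : R⁻¹ ≤ (η / R) ^ t) :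
    min (min η (η * max r R⁻¹)) r ≤ η * r ^ t := by
  rcases le_total 1 r with h1 | h1
  · exact min_le_of_left_le <| min_le_of_left_le <|
      le_mul_of_one_le_right hη₀.le (Real.one_le_rpow h1 ht₀)
  rcases le_total R⁻¹ r with hRr | hrR
  · refine min_le_of_left_le <| min_le_of_right_le <| mul_le_mul_of_nonneg_left ?_ hη₀.le
    simpa [hRr] using Real.rpow_le_rpow_of_exponent_ge hr h1 ht
  rcases le_total (η / R) r with hηr | hrη
  · refine min_le_of_left_le <| min_le_of_right_le <| mul_le_mul_of_nonneg_left ?_ hη₀.le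
    rw [max_eq_right hrR]
    exact htooth.trans (Real.rpow_le_rpow (by positivity) hηr ht₀)
  · have hcodim : r ^ (1 - t) ≤ η :=
      calc r ^ (1 - t) ≤ (η / R) ^ (1 - t) := Real.rpow_le_rpow hr.le hrη (by linarith)
        _ = (η / R) / (η / R) ^ t := by rw [Real.rpow_sub (by positivity), Real.rpow_one]
        _ ≤ (η / R) / R⁻¹ := div_le_div_of_nonneg_left (by positivity) (by positivity) htooth
        _ = η := by field_simp
    refine min_le_of_right_le ?_
    calc r = r ^ (1 - t) * r ^ t := by rw [← Real.rpow_add hr, sub_add_cancel, Real.rpow_one]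
      _ ≤ η * r ^ t := mul_le_mul_of_nonneg_right hcodim (by positivity)

lemma volume_comb_inter_dyadic_le {K : ℕ} {t : ℝ} (hη₀ : 0 < η) (hη : η ≤ 1) (ht₀ : 0 ≤ t)
    (ht : t ≤ 1) (htooth : (2 ^ K)⁻¹ ≤ (η / 2 ^ K) ^ t) (k m : ℤ) :
    volume (comb K η ∩ Icc (m * 2 ^ (-k)) ((m + 1) * 2 ^ (-k))) ≤
      volume (comb K η) * ENNReal.ofReal ((2 ^ (-k)) ^ t) := by
  have htotal : volume (comb K η ∩ Icc (m * 2 ^ (-k)) ((m + 1) * 2 ^ (-k))) ≤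
      ENNReal.ofReal η := (measure_mono inter_subset_left).trans_eq (volume_comb hη₀.le hη K)
  have hlength : volume (comb K η ∩ Icc (m * 2 ^ (-k)) ((m + 1) * 2 ^ (-k))) ≤
      ENNReal.ofReal (2 ^ (-k)) := by
    refine (measure_mono inter_subset_right).trans_eq ?_
    rw [Real.volume_Icc]
    ring_nf
  rw [volume_comb hη₀.le hη, ← ENNReal.ofReal_mul hη₀.le]
  refine le_trans ?_ (ENNReal.ofReal_le_ofReal
    (min_le_mul_rpow hη₀ (by positivity) (by positivity) ht₀ ht htooth))
  rw [ENNReal.ofReal_min, ENNReal.ofReal_min]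
  exact le_min (le_min htotal (volume_comb_inter_dyadic_le_mul_max hη₀.le hη K k m)) hlength

lemma one_le_dyadicContent_comb {d K : ℕ} {t : ℝ} (hη₀ : 0 < η) (hη : η ≤ 1) (ht₀ : 0 ≤ t)
    (ht : t ≤ 1) (htooth : (2 ^ K)⁻¹ ≤ (η / 2 ^ K) ^ t) :
    1 ≤ dyadicContent (d * t) {x : Euc d | ∀ i, x i ∈ comb K η} := by
  have hvol := volume_comb hη₀.le hη K
  refine one_le_dyadicContent_setOf_forall_apply_mem ?_ ?_
    (volume_comb_inter_dyadic_le hη₀ hη ht₀ ht htooth)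
  · simpa [hvol] using hη₀
  · simp [hvol]

end Comb

section LatticeBlock

variable {d : ℕ} {η : ℝ} {p q : Euc d}

/-- The points that lie in `z + [0, η)^d` for some `z ∈ ℤ^d`. -/
def latticeNhd (d : ℕ) (η : ℝ) : Set (Euc d) := {p | ∀ i, p i ∈ fractLT η}

/-- The part of `latticeNhd d η` in the half-open cube of side `2 ^ K` with lowest corner
`(X, …, X)`. -/
def latticeBlock (d K : ℕ) (η : ℝ) (X : ℕ) : Set (Euc d) :=
  latticeNhd d η ∩ {p | ∀ i, p i ∈ Ico (X : ℝ) (X + 2 ^ K)}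

lemma setOf_forall_apply_mem_comb_subset_normTrunc {A : Set (Euc d)} {K X : ℕ}
    (hA : latticeBlock d K η X ⊆ A) :
    {x : Euc d | ∀ i, x i ∈ comb K η} ⊆ normTrunc A (2 ^ K) (WithLp.toLp 2 fun _ => (X : ℝ)) := by
  intro z hz
  refine ⟨WithLp.toLp 2 fun i => X + 2 ^ K * z i, ⟨hA ⟨fun i => ?_, fun i => ?_⟩, fun i => ?_⟩, ?_⟩
  · simpa [fractLT] using (hz i).1
  · simpa using (hz i).2
  · simpa using Ico_subset_Icc_self (hz i).2
  · ext i
    simp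

lemma abs_apply_sub_le_dist (p q : Euc d) (i : Fin d) : |p i - q i| ≤ dist p q := by
  simpa [Real.dist_eq] using PiLp.dist_apply_le p q i

lemma dist_le_mul_of_forall_abs_sub_le {M : ℝ} (h : ∀ i, |p i - q i| ≤ M) :
    dist p q ≤ d * M := by
  have hsum : dist p q ≤ ∑ i, |p i - q i| := by
    refine le_of_sq_le_sq ?_ (by positivity)
    simpa [EuclideanSpace.dist_sq_eq, Real.dist_eq] using
      Finset.sum_sq_le_sq_sum_of_nonneg fun i (_ : i ∈ Finset.univ) => abs_nonneg (p i - q i)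
  exact hsum.trans ((Finset.sum_le_sum fun i _ => h i).trans_eq (by simp))

lemma abs_sq_sub_sq_le {u v : ℝ} (h : |u - v| ≤ η) : |u ^ 2 - v ^ 2| ≤ η * (2 * |u| + η) := by
  have hadd : |u + v| ≤ 2 * |u| + η :=
    calc |u + v| = |2 * u - (u - v)| := by ring_nf
      _ ≤ |2 * u| + |u - v| := abs_sub _ _
      _ ≤ 2 * |u| + η := by rw [abs_mul, abs_two]; gcongr
  rw [sq_sub_sq, mul_comm, abs_mul]
  exact mul_le_mul h hadd (abs_nonneg _) ((abs_nonneg _).trans h)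

lemma exists_int_abs_sub_sub_le {x y : ℝ} (hx : x ∈ fractLT η) (hy : y ∈ fractLT η) :
    ∃ v : ℤ, |x - y - v| ≤ η := by
  refine ⟨⌊x⌋ - ⌊y⌋, ?_⟩
  have hfract : x - y - (⌊x⌋ - ⌊y⌋ : ℤ) = Int.fract x - Int.fract y := by
    push_cast [← Int.self_sub_floor]
    ring
  rw [hfract]
  exact abs_sub_le_of_nonneg_of_le (Int.fract_nonneg x) hx.le (Int.fract_nonneg y) hy.le

lemma exists_int_abs_sq_dist_sub_le (hp : p ∈ latticeNhd d η) (hq : q ∈ latticeNhd d η) :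
    ∃ N : ℤ, |dist p q ^ 2 - N| ≤ d * (η * (2 * dist p q + η)) := by
  choose v hv using fun i => exists_int_abs_sub_sub_le (hp i) (hq i)
  refine ⟨∑ i, v i ^ 2, ?_⟩
  have hcoord : ∀ i, |(p i - q i) ^ 2 - v i ^ 2| ≤ η * (2 * dist p q + η) := fun i => by
    have hη : 0 ≤ η := (abs_nonneg _).trans (hv i)
    refine (abs_sq_sub_sq_le (hv i)).trans ?_
    gcongr
    exact abs_apply_sub_le_dist p q i
  calc |dist p q ^ 2 - (∑ i, v i ^ 2 : ℤ)| = |∑ i, ((p i - q i) ^ 2 - v i ^ 2)| := by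
        simp [EuclideanSpace.dist_sq_eq, Real.dist_eq, Finset.sum_sub_distrib]
    _ ≤ ∑ i, |(p i - q i) ^ 2 - v i ^ 2| := Finset.abs_sum_le_sum_abs _ _
    _ ≤ ∑ _i : Fin d, η * (2 * dist p q + η) := Finset.sum_le_sum fun i _ => hcoord i
    _ = d * (η * (2 * dist p q + η)) := by simp

lemma half_le_abs_add_half_sub_intCast (M N : ℤ) : (1 / 2 : ℝ) ≤ |(M : ℝ) + 1 / 2 - N| := by
  rcases le_or_gt N M with h | h
  · have hNM : (N : ℝ) ≤ M := mod_cast h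
    exact (by linarith : (1 / 2 : ℝ) ≤ M + 1 / 2 - N).trans (le_abs_self _)
  · have hMN : (M : ℝ) + 1 ≤ N := mod_cast h
    exact (by linarith : (1 / 2 : ℝ) ≤ -(M + 1 / 2 - N)).trans (neg_le_abs _)

lemma sqrt_sq_add_half_lt_add_one (n : ℕ) : √((n : ℝ) ^ 2 + 1 / 2) < n + 1 := by
  rw [Real.sqrt_lt' (by positivity)]
  nlinarith [n.cast_nonneg (α := ℝ)]

lemma lt_sqrt_sq_add_half (n : ℕ) : (n : ℝ) < √((n : ℝ) ^ 2 + 1 / 2) :=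
  Real.lt_sqrt_of_sq_lt (by linarith)

lemma dist_ne_sqrt_of_mem_latticeNhd {D j : ℕ} (hη₀ : 0 ≤ η) (hη : η ≤ 1)
    (hηD : 2 * d * (2 * D + 3) * η < 1) (hj : j ≤ D)
    (hp : p ∈ latticeNhd d η) (hq : q ∈ latticeNhd d η) :
    dist p q ≠ √((j : ℝ) ^ 2 + 1 / 2) := by
  intro hdist
  obtain ⟨N, hN⟩ := exists_int_abs_sq_dist_sub_le hp hq
  have hfar : 1 / 2 ≤ |dist p q ^ 2 - N| := by
    rw [hdist, Real.sq_sqrt (by positivity)]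
    have hhalf := half_le_abs_add_half_sub_intCast (j ^ 2) N
    push_cast at hhalf
    exact hhalf
  have hjD : (j : ℝ) ≤ D := mod_cast hj
  have hdistD : 2 * dist p q + η ≤ 2 * D + 3 := by
    linarith [sqrt_sq_add_half_lt_add_one j]
  have hnear : d * (η * (2 * dist p q + η)) ≤ d * (η * (2 * D + 3)) := by gcongr
  linarith

end LatticeBlock

section SparseBlocks

variable {d : ℕ}

/-- The binary logarithm of the inverse tooth width for which all distances up to `D` are
controlled; it only has to satisfy `2 * d * (2 * D + 3) < 2 ^ toothExp d D`. -/
def toothExp (d D : ℕ) : ℕ := 2 * d * (2 * D + 3)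

/-- The tooth width of the block that avoids `√(j² + 1/2)` for `j ≤ D`. -/
def toothWidth (d D : ℕ) : ℝ := (2 ^ toothExp d D)⁻¹

/-- The binary logarithm of the side of the block that avoids `√(j² + 1/2)` for `j ≤ D`. The factor
`D` makes the side large enough for full content in every dimension up to `d * (D / (D + 1))`. -/
def sideExp (d D : ℕ) : ℕ := toothExp d D * D

/-- The parameter `D` of the `n`-th block. The `n`-th block occupies the coordinate range from
`2 * scale d n + 1` to `2 * scale d n + 1 + 2 ^ sideExp d (scale d n)`; the next parameter bounds
all distances between points of the blocks up to this one. -/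
def scale (d : ℕ) : ℕ → ℕ
  | 0 => 0
  | n + 1 => d * (2 * scale d n + 1 + 2 ^ sideExp d (scale d n))

/-- The `n`-th of the sparse sequence of lattice blocks. -/
def sparseBlock (d n : ℕ) : Set (Euc d) :=
  latticeBlock d (sideExp d (scale d n)) (toothWidth d (scale d n)) (2 * scale d n + 1)

/-- The `j`-th distance avoided by the union of the sparse blocks. -/
def avoidedDist (d j : ℕ) : ℝ := √((scale d j : ℝ) ^ 2 + 1 / 2)

lemma toothWidth_pos (d D : ℕ) : 0 < toothWidth d D := by
  unfold toothWidth
  positivity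

lemma toothWidth_le_one (d D : ℕ) : toothWidth d D ≤ 1 :=
  inv_le_one_of_one_le₀ (one_le_pow₀ one_le_two)

lemma mul_toothWidth_lt_one (d D : ℕ) : 2 * d * (2 * D + 3) * toothWidth d D < 1 := by
  rw [toothWidth, ← div_eq_mul_inv, div_lt_one (by positivity)]
  exact_mod_cast (toothExp d D).lt_two_pow_self

lemma inv_two_pow_sideExp_le {D : ℕ} {t : ℝ} (ht : (D + 1) * t ≤ D) :
    (2 ^ sideExp d D)⁻¹ ≤ (toothWidth d D / 2 ^ sideExp d D) ^ t := by
  have hside : ((2 : ℝ) ^ sideExp d D)⁻¹ = toothWidth d D ^ (D : ℝ) := by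
    rw [toothWidth, sideExp, pow_mul, Real.rpow_natCast, inv_pow]
  have htooth : toothWidth d D / 2 ^ sideExp d D = toothWidth d D ^ (D + 1 : ℝ) := by
    rw [div_eq_mul_inv, hside, add_comm, Real.rpow_add (toothWidth_pos d D), Real.rpow_one]
  rw [htooth, hside, ← Real.rpow_mul (toothWidth_pos d D).le]
  exact Real.rpow_le_rpow_of_exponent_ge (toothWidth_pos d D) (toothWidth_le_one d D) ht

lemma scale_strictMono (hd : 0 < d) : StrictMono (scale d) :=
  strictMono_nat_of_lt_succ fun n =>
    calc scale d n < 2 * scale d n + 1 + 2 ^ sideExp d (scale d n) := by lia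
      _ ≤ scale d (n + 1) := Nat.le_mul_of_pos_left _ hd

lemma le_sideExp_scale (hd : 0 < d) (n : ℕ) : n ≤ sideExp d (scale d n) :=
  (scale_strictMono hd).le_apply.trans (Nat.le_mul_of_pos_left _ (by unfold toothExp; positivity))

lemma tendsto_two_pow_sideExp_scale (hd : 0 < d) :
    Tendsto (fun n => (2 : ℝ) ^ sideExp d (scale d n)) atTop atTop :=
  (tendsto_pow_atTop_atTop_of_one_lt one_lt_two).comp
    (tendsto_atTop_mono (le_sideExp_scale hd) tendsto_id)

lemma tendsto_scale_cast (hd : 0 < d) : Tendsto (fun n => (scale d n : ℝ)) atTop atTop :=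
  tendsto_natCast_atTop_atTop.comp (scale_strictMono hd).tendsto_atTop

lemma tendsto_avoidedDist (hd : 0 < d) : Tendsto (avoidedDist d) atTop atTop :=
  tendsto_atTop_mono (fun j => (lt_sqrt_sq_add_half (scale d j)).le) (tendsto_scale_cast hd)

lemma le_apply_of_mem_sparseBlock {n : ℕ} {p : Euc d} (hp : p ∈ sparseBlock d n) (i : Fin d) :
    (2 * scale d n + 1 : ℝ) ≤ p i := by
  exact_mod_cast (hp.2 i).1

lemma apply_nonneg_of_mem_sparseBlock {n : ℕ} {p : Euc d} (hp : p ∈ sparseBlock d n)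
    (i : Fin d) : 0 ≤ p i :=
  (by positivity : (0 : ℝ) ≤ 2 * scale d n + 1).trans (le_apply_of_mem_sparseBlock hp i)

lemma apply_le_of_mem_sparseBlock_of_lt (hd : 0 < d) {m n : ℕ} (hmn : m < n) {p : Euc d}
    (hp : p ∈ sparseBlock d m) (i : Fin d) : p i ≤ (scale d n / d : ℝ) := by
  rw [le_div_iff₀' (by positivity)]
  have hscale : d * (2 * scale d m + 1 + 2 ^ sideExp d (scale d m)) ≤ scale d n :=
    (scale_strictMono hd).monotone hmn
  have hpi : p i ≤ ((2 * scale d m + 1 : ℕ) : ℝ) + 2 ^ sideExp d (scale d m) := (hp.2 i).2.le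
  calc (d : ℝ) * p i ≤ d * (((2 * scale d m + 1 : ℕ) : ℝ) + 2 ^ sideExp d (scale d m)) := by gcongr
    _ ≤ scale d n := by exact_mod_cast hscale

lemma dist_le_scale_of_mem_sparseBlock (hd : 0 < d) {a b j : ℕ} (ha : a < j) (hb : b < j)
    {p q : Euc d} (hp : p ∈ sparseBlock d a) (hq : q ∈ sparseBlock d b) :
    dist p q ≤ scale d j := by
  have hcoord : ∀ i, |p i - q i| ≤ scale d j / d := fun i =>
    abs_sub_le_of_nonneg_of_le (apply_nonneg_of_mem_sparseBlock hp i)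
      (apply_le_of_mem_sparseBlock_of_lt hd ha hp i) (apply_nonneg_of_mem_sparseBlock hq i)
      (apply_le_of_mem_sparseBlock_of_lt hd hb hq i)
  refine (dist_le_mul_of_forall_abs_sub_le hcoord).trans_eq ?_
  field_simp

lemma scale_add_one_le_dist_of_mem_sparseBlock (hd : 0 < d) {a b : ℕ} (hab : a < b)
    {p q : Euc d} (hp : p ∈ sparseBlock d a) (hq : q ∈ sparseBlock d b) :
    scale d b + 1 ≤ dist p q := by
  let i : Fin d := ⟨0, hd⟩
  have hpi : p i ≤ scale d b :=
    (apply_le_of_mem_sparseBlock_of_lt hd hab hp i).trans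
      (div_le_self (by positivity) (Nat.one_le_cast.2 hd))
  have hqi := le_apply_of_mem_sparseBlock hq i
  have hdist := (neg_le_abs _).trans (abs_apply_sub_le_dist p q i)
  linarith

lemma dist_ne_avoidedDist_of_le (hd : 0 < d) {a b : ℕ} (hab : a ≤ b) {p q : Euc d}
    (hp : p ∈ sparseBlock d a) (hq : q ∈ sparseBlock d b) (j : ℕ) :
    dist p q ≠ avoidedDist d j := by
  rcases lt_or_ge b j with hbj | hjb
  · exact ((dist_le_scale_of_mem_sparseBlock hd (hab.trans_lt hbj) hbj hp hq).trans_lt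
      (lt_sqrt_sq_add_half _)).ne
  have hscale : scale d j ≤ scale d b := (scale_strictMono hd).monotone hjb
  rcases hab.lt_or_eq with hab | rfl
  · have hlt : avoidedDist d j < scale d b + 1 :=
      (sqrt_sq_add_half_lt_add_one _).trans_le (by gcongr)
    exact (hlt.trans_le (scale_add_one_le_dist_of_mem_sparseBlock hd hab hp hq)).ne'
  · exact dist_ne_sqrt_of_mem_latticeNhd (toothWidth_pos d _).le (toothWidth_le_one d _)
      (mul_toothWidth_lt_one d _) hscale hp.1 hq.1

lemma avoidedDist_notMem_distSet (hd : 0 < d) (j : ℕ) :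
    avoidedDist d j ∉ distSet (⋃ n, sparseBlock d n) (⋃ n, sparseBlock d n) := by
  rintro ⟨p, hp, q, hq, hdist⟩
  obtain ⟨a, hp⟩ := mem_iUnion.1 hp
  obtain ⟨b, hq⟩ := mem_iUnion.1 hq
  rcases le_total a b with hab | hba
  · exact dist_ne_avoidedDist_of_le hd hab hp hq j hdist
  · exact dist_ne_avoidedDist_of_le hd hba hq hp j (dist_comm p q ▸ hdist)

lemma iSup_dyadicContent_normTrunc_eq_one {s : ℝ} (hs : 0 < s) {A : Set (Euc d)} {n : ℕ}
    (hA : sparseBlock d n ⊆ A) (hn : (scale d n + 1) * s ≤ scale d n * d) :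
    ⨆ x, dyadicContent s (normTrunc A (2 ^ sideExp d (scale d n)) x) = 1 := by
  refine le_antisymm
    (iSup_le fun x => dyadicContent_le_one hs (normTrunc_subset_unitCube A (by positivity) x)) ?_
  have hsd : s ≤ d := by
    by_contra! hds
    nlinarith [(scale d n).cast_nonneg (α := ℝ)]
  have hd : (0 : ℝ) < d := hs.trans_le hsd
  have ht : (scale d n + 1) * (s / d) ≤ scale d n := by
    rwa [← mul_div_assoc, div_le_iff₀ hd]
  have hcomb := one_le_dyadicContent_comb (d := d) (toothWidth_pos d _) (toothWidth_le_one d _)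
    (by positivity) ((div_le_one hd).2 hsd) (inv_two_pow_sideExp_le ht)
  rw [mul_div_cancel₀ s hd.ne'] at hcomb
  exact hcomb.trans <|
    (dyadicContent_mono (setOf_forall_apply_mem_comb_subset_normTrunc hA)).trans <|
      le_iSup (fun x => dyadicContent s (normTrunc A (2 ^ sideExp d (scale d n)) x)) _

lemma eventually_scale_add_one_mul_le (hd : 0 < d) {s : ℝ} (hs : s < d) :
    ∀ᶠ n in atTop, (scale d n + 1) * s ≤ scale d n * d := by
  filter_upwards [(tendsto_scale_cast hd).eventually_ge_atTop (s / (d - s))] with n hn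
  rw [div_le_iff₀ (sub_pos.2 hs)] at hn
  linarith

end SparseBlocks

theorem statement14_general (d : ℕ) (hd : 0 < d) :
    ∃ (A : Set (Euc d)) (R : ℕ → ℝ) (dj : ℕ → ℝ),
      Tendsto R atTop atTop ∧ Tendsto dj atTop atTop ∧
      (∀ s : ℝ, 0 < s → s < d →
        ∀ᶠ n in atTop, ⨆ x : Euc d, dyadicContent s (normTrunc A (R n) x) = 1) ∧
      ∀ j, dj j ∉ distSet A A := by
  refine ⟨⋃ n, sparseBlock d n, fun n => 2 ^ sideExp d (scale d n), avoidedDist d,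
    tendsto_two_pow_sideExp_scale hd, tendsto_avoidedDist hd, fun s hs₀ hs => ?_,
    avoidedDist_notMem_distSet hd⟩
  filter_upwards [eventually_scale_add_one_mul_le hd hs] with n hn
  exact iSup_dyadicContent_normTrunc_eq_one hs₀ (subset_iUnion _ n) hn

/-- Lemma 2.4: for every `d ≥ 2` and `s ∈ (0, d)` there exist a set `A ⊆ ℝ^d`, a
rapidly growing sequence `R_n → ∞` with `lim_n sup_x H^s_∞(A_{R_n}(x)) = 1`, and a
sequence of distances `d_j → ∞` entirely avoided by `Δ(A)`. -/
theorem statement14 (d : ℕ) (hd : 2 ≤ d) (s : ℝ) (hs0 : 0 < s) (hsd : s < d) :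
    ∃ (A : Set (Euc d)) (R : ℕ → ℝ) (dj : ℕ → ℝ),
      Tendsto R atTop atTop ∧ Tendsto dj atTop atTop ∧
      Tendsto (fun n => ⨆ x : Euc d, dyadicContent s (normTrunc A (R n) x))
        atTop (nhds 1) ∧
      ∀ j, dj j ∉ distSet A A := by
  obtain ⟨A, R, dj, hR, hdj, hA, havoid⟩ := statement14_general d (by omega)
  exact ⟨A, R, dj, hR, hdj, tendsto_nhds_of_eventually_eq (hA s hs0 hsd), havoid⟩
end
end

section
/- Let d ≥ 2 and t > 0, and let μ and ν be probability measures supported on compact sets E ⊆ [0,1]^d and F ⊆ [0,1]^d respectively, each with finite (d+1)/2-energy: I_μ((d+1)/2) < ∞ and I_ν((d+1)/2) < ∞. If the real part of the integral ∫_{ℝ^d} μ̂(ξ) · conj(ν̂(ξ)) · σ̂(tξ) dξ is strictly positive, then there exist x ∈ E and y ∈ F with |x − y| = t; in other words, t ∈ Δ(E,F). -/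
open MeasureTheory Set Metric Filter
open scoped ENNReal NNReal Topology

noncomputable section

/-- The normalized surface measure `σ` on the unit sphere `S^{d-1} ⊆ ℝ^d`. -/
def sphereMeasure (d : ℕ) : Measure (Metric.sphere (0 : Euc d) 1) :=
  ((volume : Measure (Euc d)).toSphere Set.univ)⁻¹ • (volume : Measure (Euc d)).toSphere

/-- The Fourier transform `σ̂(ξ) = ∫_{S^{d-1}} e^{-i x·ξ} dσ(x)` of the normalized
surface measure on the unit sphere. -/
def sphereFT (d : ℕ) (ξ : Euc d) : ℂ :=
  ∫ x : Metric.sphere (0 : Euc d) 1,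
    Complex.exp (-(Complex.I * ((inner ℝ (x : Euc d) ξ : ℝ) : ℂ))) ∂(sphereMeasure d)

/-- The `s`-energy `I_μ(s) = ∬ |x-y|^{-s} dμ(x) dμ(y)` of a measure. -/
def energy {d : ℕ} (μ : Measure (Euc d)) (s : ℝ) : ℝ≥0∞ :=
  ∫⁻ x, ∫⁻ y, edist x y ^ (-s) ∂μ ∂μ

/-- The Fourier transform `μ̂(ξ) = ∫ e^{-i x·ξ} dμ(x)` of a finite Borel measure. -/
def fourierM {d : ℕ} (μ : Measure (Euc d)) (ξ : Euc d) : ℂ :=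
  ∫ x, Complex.exp (-(Complex.I * ((inner ℝ x ξ : ℝ) : ℂ))) ∂μ

/-!
The integrand is, up to `ξ ↦ -ξ`, the characteristic function of the distribution `ρ` of
`x - y + t • ω`, where `x`, `y`, `ω` are independent with laws `μ`, `ν`, `σ`. Damping its integral
by the Gaussian `exp (-‖ξ‖ ^ 2 / c)` turns it into `∫ (π c) ^ (d / 2) exp (-c ‖z‖ ^ 2 / 4) ∂ρ z`,
which tends to `0` as `c → ∞` when `ρ` vanishes near the origin. So a nonzero integral puts the
origin in the support of `ρ`, hence in `E - F + t • S^{d-1}`.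
-/

section CharFun

open Module

variable {V : Type*} [NormedAddCommGroup V] [InnerProductSpace ℝ V] [FiniteDimensional ℝ V]
  [MeasurableSpace V] [BorelSpace V] {ρ : Measure V} {c δ : ℝ}

lemma integral_gaussian_mul_cexp_inner_mul_I (hc : 0 < c) (x : V) :
    ∫ ξ : V, Complex.exp (-(c : ℂ)⁻¹ * ‖ξ‖ ^ 2) * Complex.exp (inner ℝ x ξ * Complex.I) =
      ((Real.pi * c) ^ (finrank ℝ V / 2 : ℝ) * Real.exp (-(‖x‖ ^ 2 / 4) * c) : ℝ) := by
  have hc' : (c : ℂ) ≠ 0 := by exact_mod_cast hc.ne'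
  have hexp : (Complex.I ^ 2 * ‖x‖ ^ 2 / (4 * (c : ℂ)⁻¹) : ℂ) = (-(‖x‖ ^ 2 / 4) * c : ℝ) := by
    push_cast
    rw [Complex.I_sq]
    field_simp
  simp_rw [← Complex.exp_add, mul_comm _ Complex.I]
  rw [GaussianFourier.integral_cexp_neg_mul_sq_norm_add (by simpa using hc), hexp,
    Complex.ofReal_mul ((Real.pi * c) ^ _), Complex.ofReal_cpow (by positivity), Complex.ofReal_exp]
  simp

lemma integrable_prod_gaussian_mul_cexp_inner_mul_I [IsFiniteMeasure ρ] (hc : 0 < c) :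
    Integrable (fun p : V × V ↦
      Complex.exp (-(c : ℂ)⁻¹ * ‖p.1‖ ^ 2) * Complex.exp (inner ℝ p.2 p.1 * Complex.I))
      (volume.prod ρ) := by
  have gaussian_integrable : Integrable fun ξ : V ↦ Complex.exp (-(c : ℂ)⁻¹ * ‖ξ‖ ^ 2) := by
    simpa using GaussianFourier.integrable_cexp_neg_mul_sq_norm_add (V := V)
      (b := (c : ℂ)⁻¹) (by simpa using hc) 0 0
  refine (gaussian_integrable.mul_prod (integrable_const (μ := ρ) (1 : ℂ))).mono ?_ ?_
  · exact Continuous.aestronglyMeasurable (by fun_prop)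
  · exact ae_of_all _ fun p ↦ by simp

lemma integral_gaussian_mul_charFun [IsFiniteMeasure ρ] (hc : 0 < c) :
    ∫ ξ, Complex.exp (-(c : ℂ)⁻¹ * ‖ξ‖ ^ 2) * charFun ρ ξ =
      ((Real.pi * c) ^ (finrank ℝ V / 2 : ℝ) * ∫ x, Real.exp (-(‖x‖ ^ 2 / 4) * c) ∂ρ : ℝ) := by
  simp_rw [charFun_apply, ← integral_const_mul]
  rw [integral_integral_swap (integrable_prod_gaussian_mul_cexp_inner_mul_I hc)]
  simp_rw [integral_gaussian_mul_cexp_inner_mul_I hc]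
  exact integral_complex_ofReal

lemma tendsto_integral_gaussian_mul_charFun_zero [IsFiniteMeasure ρ] (hδ : 0 < δ)
    (hρ : ∀ᵐ x ∂ρ, δ ≤ ‖x‖) :
    Tendsto (fun c : ℝ ↦ ∫ ξ, Complex.exp (-(c : ℂ)⁻¹ * ‖ξ‖ ^ 2) * charFun ρ ξ)
      atTop (𝓝 0) := by
  have decay := (tendsto_rpow_mul_exp_neg_mul_atTop_nhds_zero (finrank ℝ V / 2) (δ ^ 2 / 4)
    (by positivity)).const_mul (Real.pi ^ (finrank ℝ V / 2 : ℝ) * ρ.real univ)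
  rw [mul_zero] at decay
  refine squeeze_zero_norm' ?_ decay
  filter_upwards [eventually_gt_atTop 0] with c hc
  have integral_le : ‖∫ x, Real.exp (-(‖x‖ ^ 2 / 4) * c) ∂ρ‖ ≤
      Real.exp (-(δ ^ 2 / 4) * c) * ρ.real univ := by
    refine norm_integral_le_of_norm_le_const ?_
    filter_upwards [hρ] with x hx
    rw [Real.norm_of_nonneg (Real.exp_nonneg _)]
    gcongr
  calc ‖∫ ξ, Complex.exp (-(c : ℂ)⁻¹ * ‖ξ‖ ^ 2) * charFun ρ ξ‖
    _ = (Real.pi * c) ^ (finrank ℝ V / 2 : ℝ) * ‖∫ x, Real.exp (-(‖x‖ ^ 2 / 4) * c) ∂ρ‖ := by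
      rw [integral_gaussian_mul_charFun hc, Complex.norm_real, norm_mul,
        Real.norm_of_nonneg (by positivity)]
    _ ≤ (Real.pi * c) ^ (finrank ℝ V / 2 : ℝ) *
        (Real.exp (-(δ ^ 2 / 4) * c) * ρ.real univ) := by gcongr
    _ = _ := by
      rw [Real.mul_rpow Real.pi_nonneg hc.le]
      ring

theorem zero_mem_support_of_integral_charFun_ne_zero [IsFiniteMeasure ρ]
    (h : ∫ ξ, charFun ρ ξ ≠ 0) : (0 : V) ∈ ρ.support := by
  by_contra h0
  obtain ⟨U, hU, hρU⟩ := Measure.notMem_support_iff_exists.1 h0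
  obtain ⟨δ, hδ, hball⟩ := Metric.mem_nhds_iff.1 hU
  have hfar : ∀ᵐ x ∂ρ, δ ≤ ‖x‖ := by
    filter_upwards [measure_eq_zero_iff_ae_notMem.1 hρU] with x hx
    exact not_lt.1 fun hlt ↦ hx (hball (mem_ball_zero_iff.2 hlt))
  have hlim := Real.tendsto_integral_cexp_sq_smul (Integrable.of_integral_ne_zero h)
  exact h (tendsto_nhds_unique hlim (by
    simpa using tendsto_integral_gaussian_mul_charFun_zero hδ hfar))

end CharFun

open scoped Pointwise in
lemma ae_mem_add_conv {M : Type*} [AddMonoid M] [MeasurableSpace M] [MeasurableAdd₂ M]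
    {μ ν : Measure M} [SFinite μ] [SFinite ν] {A B : Set M}
    (hA : ∀ᵐ x ∂μ, x ∈ A) (hB : ∀ᵐ y ∂ν, y ∈ B) (hAB : MeasurableSet (A + B)) :
    ∀ᵐ z ∂(μ ∗ ν), z ∈ A + B := by
  refine (ae_map_iff (by fun_prop) hAB).2 ?_
  filter_upwards [Measure.quasiMeasurePreserving_fst.ae hA,
    Measure.quasiMeasurePreserving_snd.ae hB] with p hp₁ hp₂
  exact add_mem_add hp₁ hp₂

instance isFiniteMeasure_sphereMeasure (d : ℕ) : IsFiniteMeasure (sphereMeasure d) := by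
  refine ⟨?_⟩
  rw [sphereMeasure, Measure.smul_apply, smul_eq_mul]
  exact (ENNReal.inv_mul_le_one _).trans_lt ENNReal.one_lt_top

section DiffSphere

open scoped Pointwise

variable {d : ℕ}

/-- The image of the normalized surface measure under `ω ↦ t • ω`: the uniform probability on the
sphere of radius `|t|` about the origin of `ℝ^d`, for `0 < d`. -/
def scaledSphereMeasure (d : ℕ) (t : ℝ) : Measure (Euc d) :=
  (sphereMeasure d).map fun ω : sphere (0 : Euc d) 1 ↦ t • (ω : Euc d)

/-- The distribution of `x - y + t • ω` for independent `x`, `y`, `ω` with laws `μ`, `ν` and the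
normalized surface measure; its Fourier transform is `μ̂(ξ) conj(ν̂(ξ)) σ̂(tξ)`. -/
def diffSphereMeasure (μ ν : Measure (Euc d)) (t : ℝ) : Measure (Euc d) :=
  μ ∗ ν.map (fun y ↦ (-1 : ℝ) • y) ∗ scaledSphereMeasure d t

instance isFiniteMeasure_scaledSphereMeasure (t : ℝ) :
    IsFiniteMeasure (scaledSphereMeasure d t) := by
  unfold scaledSphereMeasure
  infer_instance

instance isFiniteMeasure_diffSphereMeasure (μ ν : Measure (Euc d)) [IsFiniteMeasure μ]
    [IsFiniteMeasure ν] (t : ℝ) : IsFiniteMeasure (diffSphereMeasure μ ν t) := by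
  unfold diffSphereMeasure
  infer_instance

lemma fourierM_eq_charFun_neg (μ : Measure (Euc d)) (ξ : Euc d) :
    fourierM μ ξ = charFun μ (-ξ) := by
  simp [fourierM, charFun_apply, mul_comm]

lemma sphereFT_smul_eq_charFun_neg (t : ℝ) (ξ : Euc d) :
    sphereFT d (t • ξ) = charFun (scaledSphereMeasure d t) (-ξ) := by
  rw [scaledSphereMeasure, charFun_apply, integral_map (by fun_prop) (by fun_prop), sphereFT]
  simp [inner_smul_left, inner_smul_right, mul_comm]

lemma fourierM_mul_conj_fourierM_mul_sphereFT (μ ν : Measure (Euc d)) [IsFiniteMeasure μ]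
    [IsFiniteMeasure ν] (t : ℝ) (ξ : Euc d) :
    fourierM μ ξ * (starRingEnd ℂ) (fourierM ν ξ) * sphereFT d (t • ξ) =
      charFun (diffSphereMeasure μ ν t) (-ξ) := by
  rw [diffSphereMeasure, charFun_conv, charFun_conv, charFun_map_smul, fourierM_eq_charFun_neg,
    fourierM_eq_charFun_neg, ← charFun_neg, sphereFT_smul_eq_charFun_neg, neg_one_smul, mul_assoc]

lemma ae_mem_sphere_scaledSphereMeasure (t : ℝ) :
    ∀ᵐ z ∂(scaledSphereMeasure d t), z ∈ sphere (0 : Euc d) |t| := by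
  refine (ae_map_iff (by fun_prop) isClosed_sphere.measurableSet).2 (ae_of_all _ fun ω ↦ ?_)
  simp [norm_smul]

lemma support_diffSphereMeasure_subset {μ ν : Measure (Euc d)} [SFinite μ] [SFinite ν]
    {E F : Set (Euc d)} (hE : IsClosed E) (hF : IsCompact F)
    (hμE : ∀ᵐ x ∂μ, x ∈ E) (hνF : ∀ᵐ y ∂ν, y ∈ F) (t : ℝ) :
    (diffSphereMeasure μ ν t).support ⊆ E + (-F + sphere (0 : Euc d) |t|) := by
  have hνF' : ∀ᵐ y ∂(ν.map fun y ↦ (-1 : ℝ) • y), y ∈ -F := by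
    refine (ae_map_iff (p := (· ∈ -F)) (by fun_prop) hF.neg.measurableSet).2 ?_
    filter_upwards [hνF] with y hy
    simpa using hy
  have hcompact : IsCompact (-F + sphere (0 : Euc d) |t|) := hF.neg.add (isCompact_sphere 0 |t|)
  have hclosed : IsClosed (E + (-F + sphere (0 : Euc d) |t|)) := hE.add_right_of_isCompact hcompact
  exact Measure.support_subset_of_isClosed hclosed
    (ae_mem_add_conv hμE
      (ae_mem_add_conv hνF' (ae_mem_sphere_scaledSphereMeasure t) hcompact.measurableSet)
      hclosed.measurableSet)

lemma abs_mem_distSet_of_zero_mem_add_sphere {E F : Set (Euc d)} {t : ℝ}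
    (h : (0 : Euc d) ∈ E + (-F + sphere (0 : Euc d) |t|)) : |t| ∈ distSet E F := by
  obtain ⟨x, hx, _, ⟨y, hy, z, hz, rfl⟩, hsum⟩ := h
  refine ⟨x, hx, -y, hy, ?_⟩
  have hxy : x - -y = -z := by
    rw [sub_neg_eq_add, ← add_eq_zero_iff_eq_neg, add_assoc]
    exact hsum
  rw [dist_eq_norm, hxy, norm_neg]
  exact mem_sphere_zero_iff_norm.1 hz

end DiffSphere

theorem statement18_general {d : ℕ} {t : ℝ} (ht : 0 ≤ t) (μ ν : Measure (Euc d))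
    [IsFiniteMeasure μ] [IsFiniteMeasure ν] {E F : Set (Euc d)} (hE : IsClosed E)
    (hF : IsCompact F) (hμE : μ Eᶜ = 0) (hνF : ν Fᶜ = 0)
    (hne : ∫ ξ : Euc d,
      fourierM μ ξ * (starRingEnd ℂ) (fourierM ν ξ) * sphereFT d (t • ξ) ≠ 0) :
    t ∈ distSet E F := by
  simp_rw [fourierM_mul_conj_fourierM_mul_sphereFT] at hne
  rw [integral_neg_eq_self] at hne
  have hmem := support_diffSphereMeasure_subset hE hF hμE hνF t
    (zero_mem_support_of_integral_charFun_ne_zero hne)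
  rw [← abs_of_nonneg ht]
  exact abs_mem_distSet_of_zero_mem_add_sphere hmem

/-- Proposition 5.1(b) (converse direction): if `μ, ν` are probability measures on
compact sets `E, F ⊆ [0,1]^d` with finite `(d+1)/2`-energy and the (real part of the)
integral `∫ μ̂(ξ) conj(ν̂(ξ)) σ̂(tξ) dξ` is strictly positive, then `t ∈ Δ(E,F)`. -/
theorem statement18 (d : ℕ) (hd : 2 ≤ d) (t : ℝ) (ht : 0 < t)
    (μ ν : Measure (Euc d)) (hμ : IsProbabilityMeasure μ) (hν : IsProbabilityMeasure ν)
    (E F : Set (Euc d)) (hEcpt : IsCompact E) (hFcpt : IsCompact F)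
    (hE : E ⊆ unitCube d) (hF : F ⊆ unitCube d)
    (hμE : μ Eᶜ = 0) (hνF : ν Fᶜ = 0)
    (hIμ : energy μ (((d : ℝ) + 1) / 2) < ⊤)
    (hIν : energy ν (((d : ℝ) + 1) / 2) < ⊤)
    (hpos : 0 < (∫ ξ : Euc d,
        fourierM μ ξ * (starRingEnd ℂ) (fourierM ν ξ) * sphereFT d (t • ξ)).re) :
    t ∈ distSet E F := by
  exact statement18_general ht.le μ ν hEcpt.isClosed hFcpt hμE hνF fun h ↦ by simp [h] at hpos
end
end
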